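/- arXiv:0707.2839 — 2 statements merged into one kernel-verified Lean document; each statement's English description precedes it below -/
import Mathlib

section
/- Fix an integer d ≥ 3. There exist constants C > 0 and ε_0 > 0 (depending only on d) such that for every ε ∈ (0, ε_0) there is θ_0 > 0 satisfying E[β e^{θ_0 β}] = 0, |θ_0 − (d−1)ε/(d−2)| ≤ C·ε², and |E[e^{θ_0 β}] − (1 − (d−1)ε²/(2(d−2)))| ≤ C·ε³, where β = w − 1 and w is a binomial random variable with parameters d−1 and p = (1−ε)/(d−1). -/
/-!
Write `m = d - 2`, so that `w` has `m + 1` trials, and put `q = 1 - p` and `x = e^θ`. By the binomial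
theorem `E[e^{θβ}] = x⁻¹ (p x + q)^(m+1)` (`sum_binomial_exp`) and
`E[β e^{θβ}] = x⁻¹ (p x + q)^m (m p x - q)` (`sum_binomial_mul_exp`). The latter vanishes exactly when
`x = q / (m p)`, that is, `θ₀ = log (1 + ε/m) - log (1 - ε)`, which is `ε/m + ε + O(ε²)`.
At this point `p x + q = 1 + ε/m`, so `E[e^{θ₀β}] = (1 - ε)(1 + ε/m)^m`, and the second-order Taylor
expansion of `(1 + u)^m` (`exists_taylor_bound`) gives `1 - (m+1)ε²/(2m) + O(ε³)`.
-/

open Real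

/-- The first moment of the (unnormalised) binomial weights, from
`k * (n+1).choose k = (n+1) * n.choose (k-1)`. -/
lemma sum_choose_mul_self (m : ℕ) (a b : ℝ) :
    ∑ k ∈ Finset.range (m + 2), ((m + 1).choose k : ℝ) * a ^ k * b ^ (m + 1 - k) * (k : ℝ)
      = (m + 1) * a * (a + b) ^ m := by
  rw [Finset.sum_range_succ', add_pow, Finset.mul_sum]
  simp only [Nat.cast_zero, mul_zero, add_zero]
  refine Finset.sum_congr rfl fun k _ => ?_
  have h : ((m : ℝ) + 1) * (m.choose k : ℝ) = ((m + 1).choose (k + 1) : ℝ) * ((k : ℝ) + 1) := by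
    exact_mod_cast Nat.add_one_mul_choose_eq m k
  rw [Nat.add_sub_add_right]
  push_cast
  linear_combination (-(a ^ (k + 1) * b ^ (m - k))) * h

lemma sum_binomial_exp (m : ℕ) (p q θ : ℝ) :
    ∑ k ∈ Finset.range (m + 2), ((m + 1).choose k : ℝ) * p ^ k * q ^ (m + 1 - k) *
      Real.exp (θ * ((k : ℝ) - 1))
      = (Real.exp θ)⁻¹ * (p * Real.exp θ + q) ^ (m + 1) := by
  rw [add_pow, Finset.mul_sum]
  refine Finset.sum_congr rfl fun k _ => ?_
  rw [mul_sub, mul_one, Real.exp_sub, mul_comm θ, Real.exp_nat_mul]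
  ring

lemma sum_binomial_mul_exp (m : ℕ) (p q θ : ℝ) :
    ∑ k ∈ Finset.range (m + 2), ((m + 1).choose k : ℝ) * p ^ k * q ^ (m + 1 - k) *
      (((k : ℝ) - 1) * Real.exp (θ * ((k : ℝ) - 1)))
      = (Real.exp θ)⁻¹ * (p * Real.exp θ + q) ^ m * (m * (p * Real.exp θ) - q) := by
  have h1 := sum_choose_mul_self m (p * Real.exp θ) q
  have h2 := add_pow (p * Real.exp θ) q (m + 1)
  calc _ = (Real.exp θ)⁻¹ * (∑ k ∈ Finset.range (m + 2), ((m + 1).choose k : ℝ) *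
          (p * Real.exp θ) ^ k * q ^ (m + 1 - k) * (k : ℝ)
        - ∑ k ∈ Finset.range (m + 1 + 1), (p * Real.exp θ) ^ k * q ^ (m + 1 - k) *
          ((m + 1).choose k : ℝ)) := by
        rw [← Finset.sum_sub_distrib, Finset.mul_sum]
        refine Finset.sum_congr rfl fun k _ => ?_
        rw [mul_sub, mul_one, Real.exp_sub, mul_comm θ, Real.exp_nat_mul]
        ring
    _ = _ := by
        rw [h1, ← h2]
        ring

lemma exists_taylor_bound (m : ℕ) : ∃ K : ℝ, 0 ≤ K ∧ ∀ u : ℝ, 0 ≤ u → u ≤ 1 →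
    |(1 + u) ^ m - (1 + m * u + m * (m - 1) / 2 * u ^ 2)| ≤ K * u ^ 3 := by
  induction m with
  | zero => exact ⟨0, le_rfl, fun u _ _ => by simp⟩
  | succ m ih =>
    obtain ⟨K, hK, h⟩ := ih
    refine ⟨2 * K + |(m : ℝ) * (m - 1) / 2|, by positivity, fun u hu hu1 => ?_⟩
    have e : (1 + u) ^ (m + 1) - (1 + (m + 1 : ℕ) * u + (m + 1 : ℕ) * ((m + 1 : ℕ) - 1) / 2 * u ^ 2)
        = (1 + u) * ((1 + u) ^ m - (1 + m * u + m * (m - 1) / 2 * u ^ 2))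
          + (m : ℝ) * (m - 1) / 2 * u ^ 3 := by
      push_cast
      ring
    rw [e, add_mul (2 * K)]
    refine (abs_add_le _ _).trans (add_le_add ?_ ?_)
    · rw [abs_mul, abs_of_nonneg (by linarith : 0 ≤ 1 + u), mul_assoc]
      exact mul_le_mul (by linarith) (h u hu hu1) (abs_nonneg _) (by norm_num)
    · rw [abs_mul, abs_of_nonneg (pow_nonneg hu 3)]

lemma abs_log_one_add_sub_le {u : ℝ} (hu : 0 ≤ u) : |Real.log (1 + u) - u| ≤ u ^ 2 := by
  have h1 := Real.log_le_sub_one_of_pos (by linarith : 0 < 1 + u)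
  have h2 := Real.one_sub_inv_le_log_of_pos (by linarith : 0 < 1 + u)
  have h3 : u - u ^ 2 ≤ 1 - (1 + u)⁻¹ := by
    have : 1 - (1 + u)⁻¹ - (u - u ^ 2) = u ^ 3 / (1 + u) := by
      field_simp
      ring
    have : 0 ≤ u ^ 3 / (1 + u) := by positivity
    linarith
  rw [abs_le]
  constructor <;> nlinarith [sq_nonneg u]

lemma abs_neg_log_one_sub_sub_le {t : ℝ} (ht : t ≤ 1 / 2) :
    |-Real.log (1 - t) - t| ≤ 2 * t ^ 2 := by
  have h1 := Real.log_le_sub_one_of_pos (by linarith : 0 < 1 - t)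
  have h2 := Real.one_sub_inv_le_log_of_pos (by linarith : 0 < 1 - t)
  have h3 : (1 - t)⁻¹ ≤ 1 + t + 2 * t ^ 2 := by
    rw [inv_le_iff_one_le_mul₀ (by linarith)]
    nlinarith [mul_nonneg (sq_nonneg t) (by linarith : 0 ≤ 1 - 2 * t)]
  rw [abs_le]
  constructor <;> nlinarith [sq_nonneg t]

/-- Estimates on the tilting parameter `θ₀` for `β = w - 1`, where `w` is binomial with
parameters `d-1` and `p = (1-ε)/(d-1)`: there are `C, ε₀ > 0` depending only on `d` such
that for all `ε ∈ (0, ε₀)` there is `θ₀ > 0` with `E[β e^{θ₀β}] = 0`,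
`|θ₀ - (d-1)ε/(d-2)| ≤ C ε²` and `|E[e^{θ₀β}] - (1 - (d-1)ε²/(2(d-2)))| ≤ C ε³`. -/
theorem theta0_estimates_binomial (d : ℕ) (hd : 3 ≤ d) :
    ∃ C ε₀ : ℝ, 0 < C ∧ 0 < ε₀ ∧ ∀ ε : ℝ, 0 < ε → ε < ε₀ →
      ∃ θ₀ : ℝ, 0 < θ₀ ∧
        (∑ k ∈ Finset.range d, ((d - 1).choose k : ℝ) * ((1 - ε) / ((d : ℝ) - 1)) ^ k *
            (1 - (1 - ε) / ((d : ℝ) - 1)) ^ (d - 1 - k) *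
            (((k : ℝ) - 1) * Real.exp (θ₀ * ((k : ℝ) - 1)))) = 0 ∧
        |θ₀ - ((d : ℝ) - 1) * ε / ((d : ℝ) - 2)| ≤ C * ε ^ 2 ∧
        |(∑ k ∈ Finset.range d, ((d - 1).choose k : ℝ) * ((1 - ε) / ((d : ℝ) - 1)) ^ k *
            (1 - (1 - ε) / ((d : ℝ) - 1)) ^ (d - 1 - k) *
            Real.exp (θ₀ * ((k : ℝ) - 1)))
          - (1 - ((d : ℝ) - 1) * ε ^ 2 / (2 * ((d : ℝ) - 2)))| ≤ C * ε ^ 3 := by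
  obtain ⟨m, rfl⟩ : ∃ m, d = m + 2 := ⟨d - 2, by omega⟩
  have hm1 : (1 : ℝ) ≤ m := by exact_mod_cast (by omega : 1 ≤ m)
  have hm : (0 : ℝ) < m := by linarith
  obtain ⟨K, hK, hT⟩ := exists_taylor_bound m
  refine ⟨K + 3, 1 / 2, by linarith, by norm_num, fun ε hε hε1 => ?_⟩
  have e1 : ((m + 2 : ℕ) : ℝ) - 1 = m + 1 := by push_cast; ring
  have e2 : ((m + 2 : ℕ) : ℝ) - 2 = m := by push_cast; ring
  have e3 : m + 2 - 1 = m + 1 := rfl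
  rw [e1, e2, e3]
  set u : ℝ := ε / m with hu_def
  have hmu : m * u = ε := by rw [hu_def]; field_simp
  have hu : 0 < u := by positivity
  have hue : u ≤ ε := by rw [hu_def]; exact div_le_self hε.le hm1
  have hx : Real.exp (Real.log (1 + u) - Real.log (1 - ε)) = (1 + u) / (1 - ε) := by
    rw [Real.exp_sub, Real.exp_log (by linarith), Real.exp_log (by linarith)]
  have hne : (1 - ε) ≠ 0 := by linarith
  have hne' : (1 + u) ≠ 0 := by linarith
  have hpx : (1 - ε) / ((m : ℝ) + 1) * ((1 + u) / (1 - ε)) = (1 + u) / (m + 1) := by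
    field_simp
  have hq : 1 - (1 - ε) / ((m : ℝ) + 1) = m * (1 + u) / (m + 1) := by
    rw [mul_add, hmu]
    field_simp
    ring
  have hs : (1 + u) / ((m : ℝ) + 1) + m * (1 + u) / (m + 1) = 1 + u := by
    field_simp
    ring
  have hl1 := abs_log_one_add_sub_le hu.le
  have hl2 := abs_neg_log_one_sub_sub_le hε1.le
  refine ⟨Real.log (1 + u) - Real.log (1 - ε), ?_, ?_, ?_, ?_⟩
  · have := Real.log_pos (by linarith : 1 < 1 + u)
    have := Real.log_neg (by linarith : 0 < 1 - ε) (by linarith)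
    linarith
  · rw [sum_binomial_mul_exp, hx, hpx, hq]
    ring
  · have e : ((m : ℝ) + 1) * ε / m = u + ε := by
      rw [hu_def]
      field_simp
      ring
    have hsq : u ^ 2 ≤ ε ^ 2 := pow_le_pow_left₀ hu.le hue 2
    have hKε : 0 ≤ K * ε ^ 2 := by positivity
    rw [e]
    rw [abs_le] at *
    constructor <;> linarith [hl1.1, hl1.2, hl2.1, hl2.2]
  · rw [sum_binomial_exp, hx, hpx, hq, hs]
    have hM : ((1 + u) / (1 - ε))⁻¹ * (1 + u) ^ (m + 1) = (1 - ε) * (1 + u) ^ m := by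
      rw [pow_succ]
      field_simp
    -- With `u = ε/m`, the cubic term left over from multiplying out is `-(m-1)/(2m) ε³`.
    have e : (1 - ε) * (1 + u) ^ m - (1 - ((m : ℝ) + 1) * ε ^ 2 / (2 * m))
        = (1 - ε) * ((1 + u) ^ m - (1 + m * u + m * (m - 1) / 2 * u ^ 2))
          + -((m - 1) / (2 * m) * ε ^ 3) := by
      rw [hu_def]
      field_simp
      ring
    have hc : 0 ≤ ((m : ℝ) - 1) / (2 * m) := div_nonneg (by linarith) (by linarith)
    have hc1 : ((m : ℝ) - 1) / (2 * m) ≤ 1 := by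
      rw [div_le_one (by linarith)]
      linarith
    have hε3 : 0 < ε ^ 3 := by positivity
    have hu3 : u ^ 3 ≤ ε ^ 3 := pow_le_pow_left₀ hu.le hue 3
    rw [hM, e, add_mul K]
    refine (abs_add_le _ _).trans (add_le_add ?_ ?_)
    · rw [abs_mul, abs_of_nonneg (by linarith : 0 ≤ 1 - ε)]
      calc _ ≤ 1 * (K * u ^ 3) :=
            mul_le_mul (by linarith) (hT u hu.le (by linarith)) (abs_nonneg _) (by norm_num)
        _ ≤ K * ε ^ 3 := by
            rw [one_mul]
            exact mul_le_mul_of_nonneg_left hu3 hK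
    · rw [abs_neg, abs_of_nonneg (mul_nonneg hc hε3.le)]
      exact mul_le_mul_of_nonneg_right (by linarith) hε3.le
end

section
/- Fix an integer d ≥ 3. There exists ε_0 > 0 (depending only on d) such that for every ε ∈ (0, ε_0): E[e^{−4εα}] ≥ 1, where α is the random variable taking the value d−2 with probability (1+ε)/(d−1) and the value −1 with probability 1 − (1+ε)/(d−1). -/
/-!
Squaring `1 + x / 2 ≤ exp (x / 2)` gives `1 + x + x ^ 2 / 4 ≤ exp x` for `x ≥ -2`. Hence, for small
`ε`, `E[exp (-4εα)] ≥ 1 - 4ε E[α] + 4ε² E[α²]`. Since `E[α] = ε` and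
`E[α²] = 1 + (1 + ε)(d - 3) ≥ 1`, the right-hand side is at least `1`.
-/

lemma one_add_add_sq_div_four_le_exp {x : ℝ} (hx : -2 ≤ x) :
    1 + x + x ^ 2 / 4 ≤ Real.exp x := by
  have h1 : 1 + x / 2 ≤ Real.exp (x / 2) := by linarith [Real.add_one_le_exp (x / 2)]
  have h2 : Real.exp x = Real.exp (x / 2) ^ 2 := by
    rw [← Real.exp_nat_mul]
    congr 1
    push_cast
    ring
  rw [h2]
  have h3 : (1 + x / 2) ^ 2 ≤ Real.exp (x / 2) ^ 2 := pow_le_pow_left₀ (by linarith) h1 2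
  linarith

open Real

/-- For the increment `α` taking value `d-2` with probability `(1+ε)/(d-1)` and `-1`
otherwise, there is `ε₀ > 0` depending only on `d` such that `E[e^{-4εα}] ≥ 1` for all
`ε ∈ (0, ε₀)`. -/
theorem mgf_ge_one (d : ℕ) (hd : 3 ≤ d) :
    ∃ ε₀ : ℝ, 0 < ε₀ ∧ ∀ ε : ℝ, 0 < ε → ε < ε₀ →
      1 ≤ ((1 + ε) / ((d : ℝ) - 1)) * Real.exp (-(4 * ε) * ((d : ℝ) - 2))
          + (1 - (1 + ε) / ((d : ℝ) - 1)) * Real.exp (-(4 * ε) * (-1)) := by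
  have hd' : (3 : ℝ) ≤ d := by exact_mod_cast hd
  -- This choice makes both `-4ε(d - 2) ≥ -2` and `(1 + ε) / (d - 1) ≤ 1`.
  refine ⟨1 / (2 * ((d : ℝ) - 2)), by apply div_pos <;> linarith, fun ε h0 h1 => ?_⟩
  rw [lt_div_iff₀ (by linarith)] at h1
  have hε : ε < 1 := by nlinarith
  set p := (1 + ε) / ((d : ℝ) - 1) with hp
  have hp0 : 0 ≤ p := div_nonneg (by linarith) (by linarith)
  have hp1 : p ≤ 1 := (div_le_one (by linarith)).2 (by linarith)
  have hpd : p * ((d : ℝ) - 1) = 1 + ε := div_mul_cancel₀ _ (by linarith)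
  have e1 := mul_le_mul_of_nonneg_left
    (one_add_add_sq_div_four_le_exp (x := -(4 * ε) * ((d : ℝ) - 2)) (by linarith)) hp0
  have e2 := mul_le_mul_of_nonneg_left
    (one_add_add_sq_div_four_le_exp (x := -(4 * ε) * (-1)) (by linarith)) (sub_nonneg.2 hp1)
  refine le_trans ?_ (add_le_add e1 e2)
  have key : p * (1 + -(4 * ε) * ((d : ℝ) - 2) + (-(4 * ε) * ((d : ℝ) - 2)) ^ 2 / 4)
      + (1 - p) * (1 + -(4 * ε) * (-1) + (-(4 * ε) * (-1)) ^ 2 / 4)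
      = 1 + 4 * ε ^ 2 * ((1 + ε) * ((d : ℝ) - 3)) := by
    linear_combination (-(4 * ε) + 4 * ε ^ 2 * ((d : ℝ) - 3)) * hpd
  rw [key]
  have : 0 ≤ 4 * ε ^ 2 * ((1 + ε) * ((d : ℝ) - 3)) :=
    mul_nonneg (by positivity) (mul_nonneg (by linarith) (by linarith))
  linarith
end
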